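/- arXiv:1312.2690 — 2 statements merged into one kernel-verified Lean document; each statement's English description precedes it below -/
import Mathlib

section
/- For every μ > 0 the smoothed function ω_μ is differentiable with ∇ω_μ(x) = ∫_{ℝ^n} ((ω(x + μv) − ω(x))/μ)·v dγ_n(v), and for every x ∈ ℝ^n: ‖∇ω_μ(x) − ∇ω(x)‖ ≤ (μ/2)·L·(n + 3)^{3/2}. -/
/-!
Differentiating under the integral sign gives `∇ω_μ(x) = E[∇ω(x + μV)]` for `V` standard Gaussian:
since `∇ω` is `L`-Lipschitz, the integrand is dominated near `x` by an affine function of `‖V‖`.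
The Gaussian density `g` satisfies `∂_w g(v) = -⟪v, w⟫ g(v)`, so integration by parts yields
Stein's identity `E[f(V) ⟪V, w⟫] = E[∂_w f(V)]` (`stein`). Applied to
`f(v) = (ω(x + μv) - ω(x)) / μ`, it identifies `E[∇ω(x + μV)]` with the stated integral;
applied to the coordinate functions, it gives `E‖V‖² = n`.

For the error bound, `‖E[∇ω(x + μV)] - ∇ω(x)‖ ≤ L μ E‖V‖`, and
`E‖V‖ ≤ (1 + E‖V‖²) / 2 = (n + 1) / 2 ≤ (n + 3)^{3/2} / 2`.
-/

open MeasureTheory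

/-- The standard Gaussian measure on ℝ^n, with density (2π)^{-n/2} e^{-‖v‖²/2}
with respect to Lebesgue measure. -/
noncomputable def stdGaussian (n : ℕ) : Measure (EuclideanSpace ℝ (Fin n)) :=
  volume.withDensity fun v =>
    ENNReal.ofReal ((2 * Real.pi) ^ (-(n : ℝ) / 2) * Real.exp (-‖v‖ ^ 2 / 2))

section GaussianSmoothing

open scoped RealInnerProductSpace

/-- The density of the standard Gaussian measure on `ℝ^n`, as a real-valued function. -/
noncomputable def gaussDensity (n : ℕ) (v : EuclideanSpace ℝ (Fin n)) : ℝ :=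
  (2 * Real.pi) ^ (-(n : ℝ) / 2) * Real.exp (-‖v‖ ^ 2 / 2)

lemma gaussDensity_nonneg {n : ℕ} (v : EuclideanSpace ℝ (Fin n)) : 0 ≤ gaussDensity n v := by
  unfold gaussDensity; positivity

lemma continuous_gaussDensity (n : ℕ) : Continuous (gaussDensity n) := by
  unfold gaussDensity; fun_prop

lemma integrable_stdGaussian_iff {n : ℕ} {F : Type*} [NormedAddCommGroup F] [NormedSpace ℝ F]
    {g : EuclideanSpace ℝ (Fin n) → F} :
    Integrable g (stdGaussian n) ↔ Integrable (fun v => gaussDensity n v • g v) := by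
  have h := integrable_withDensity_iff_integrable_smul' (μ := (volume : Measure
    (EuclideanSpace ℝ (Fin n)))) (f := fun v => ENNReal.ofReal (gaussDensity n v))
    (continuous_gaussDensity n).measurable.ennreal_ofReal
    (Filter.Eventually.of_forall fun _ => ENNReal.ofReal_lt_top) (g := g)
  simp only [ENNReal.toReal_ofReal (gaussDensity_nonneg _)] at h
  exact h

lemma integral_stdGaussian {n : ℕ} {F : Type*} [NormedAddCommGroup F] [NormedSpace ℝ F]
    (g : EuclideanSpace ℝ (Fin n) → F) :
    ∫ v, g v ∂stdGaussian n = ∫ v, gaussDensity n v • g v := by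
  have h := integral_withDensity_eq_integral_toReal_smul (μ := (volume : Measure
    (EuclideanSpace ℝ (Fin n)))) (f := fun v => ENNReal.ofReal (gaussDensity n v))
    (continuous_gaussDensity n).measurable.ennreal_ofReal
    (Filter.Eventually.of_forall fun _ => ENNReal.ofReal_lt_top) g
  simp only [ENNReal.toReal_ofReal (gaussDensity_nonneg _)] at h
  exact h

lemma integrable_exp_neg_mul_sq_norm (n : ℕ) {b : ℝ} (hb : 0 < b) :
    Integrable (fun v : EuclideanSpace ℝ (Fin n) => Real.exp (-b * ‖v‖ ^ 2)) := by
  by_contra h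
  have h1 := GaussianFourier.integral_rexp_neg_mul_sq_norm (V := EuclideanSpace ℝ (Fin n)) hb
  rw [integral_undef h] at h1
  have : 0 < (Real.pi / b) ^ (Module.finrank ℝ (EuclideanSpace ℝ (Fin n)) / 2 : ℝ) := by
    positivity
  linarith

/-- Half of the Gaussian decay absorbs a quartic polynomial, so continuous functions of at most
quartic growth are Gaussian integrable. -/
lemma integrable_of_growth {n : ℕ} {F : Type*} [NormedAddCommGroup F] [NormedSpace ℝ F]
    {g : EuclideanSpace ℝ (Fin n) → F} (hg : Continuous g) (C : ℝ)
    (hC : ∀ v, ‖g v‖ ≤ C * (1 + ‖v‖ ^ 4)) : Integrable g (stdGaussian n) := by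
  rw [integrable_stdGaussian_iff]
  have hC0 : 0 ≤ C := by
    have := (norm_nonneg _).trans (hC 0)
    simpa using this
  refine ((integrable_exp_neg_mul_sq_norm n (b := 1 / 4) (by norm_num)).const_mul
    ((2 * Real.pi) ^ (-(n : ℝ) / 2) * (C * 33))).mono'
    ((continuous_gaussDensity n).smul hg).aestronglyMeasurable
    (Filter.Eventually.of_forall fun v => ?_)
  have hq : 1 + ‖v‖ ^ 4 ≤ 33 * Real.exp (‖v‖ ^ 2 / 4) := by
    have := Real.quadratic_le_exp_of_nonneg (x := ‖v‖ ^ 2 / 4) (by positivity)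
    nlinarith [sq_nonneg (‖v‖ ^ 2), sq_nonneg ‖v‖]
  rw [norm_smul, Real.norm_of_nonneg (gaussDensity_nonneg v), gaussDensity]
  calc (2 * Real.pi) ^ (-(n : ℝ) / 2) * Real.exp (-‖v‖ ^ 2 / 2) * ‖g v‖
      ≤ (2 * Real.pi) ^ (-(n : ℝ) / 2) * Real.exp (-‖v‖ ^ 2 / 2)
          * (C * (33 * Real.exp (‖v‖ ^ 2 / 4))) := by
        gcongr
        exact (hC v).trans (by gcongr)
    _ = (2 * Real.pi) ^ (-(n : ℝ) / 2) * (C * 33)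
          * (Real.exp (-‖v‖ ^ 2 / 2) * Real.exp (‖v‖ ^ 2 / 4)) := by ring
    _ = _ := by
        rw [← Real.exp_add]
        congr 2
        ring

lemma pow_le_one_add_pow_four {t : ℝ} (ht : 0 ≤ t) {k : ℕ} (hk : k ≤ 4) :
    t ^ k ≤ 1 + t ^ 4 := by
  rcases le_total t 1 with h | h
  · have h1 := pow_le_one₀ ht h (n := k)
    have h2 : 0 ≤ t ^ 4 := by positivity
    linarith
  · have h1 := pow_le_pow_right₀ h hk
    linarith

instance isProbabilityMeasure_stdGaussian (n : ℕ) : IsProbabilityMeasure (stdGaussian n) := by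
  have hintegrable : Integrable (fun _ : EuclideanSpace ℝ (Fin n) => (1 : ℝ)) (stdGaussian n) :=
    integrable_of_growth continuous_const 1 fun v => by
      simp
  have hfin : IsFiniteMeasure (stdGaussian n) := by
    simpa [integrable_const_iff] using hintegrable
  have h1 : ∫ _, (1 : ℝ) ∂stdGaussian n = 1 := by
    rw [integral_stdGaussian]
    have h2 := GaussianFourier.integral_rexp_neg_mul_sq_norm
      (V := EuclideanSpace ℝ (Fin n)) (b := 1 / 2) (by norm_num)
    have h3 : ∀ v : EuclideanSpace ℝ (Fin n), gaussDensity n v • (1 : ℝ)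
        = (2 * Real.pi) ^ (-(n : ℝ) / 2) * Real.exp (-(1 / 2) * ‖v‖ ^ 2) := by
      intro v
      rw [gaussDensity, smul_eq_mul, mul_one]
      congr 2
      ring
    simp_rw [h3]
    rw [integral_const_mul, h2, finrank_euclideanSpace_fin,
      show Real.pi / (1 / 2) = 2 * Real.pi by ring, ← Real.rpow_add (by positivity)]
    ring_nf
    exact Real.rpow_zero _
  refine ⟨?_⟩
  have h4 : (stdGaussian n).real Set.univ = 1 := by simpa using h1
  rw [Measure.real, ENNReal.toReal_eq_one_iff] at h4
  exact h4

lemma hasFDerivAt_gaussDensity {n : ℕ} (v : EuclideanSpace ℝ (Fin n)) :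
    HasFDerivAt (gaussDensity n) (-(gaussDensity n v) • innerSL ℝ v) v := by
  have h1 : HasFDerivAt (fun v : EuclideanSpace ℝ (Fin n) => ‖v‖ ^ 2)
      (2 • innerSL ℝ v) v := (hasStrictFDerivAt_norm_sq v).hasFDerivAt
  have h2 := ((h1.const_mul (-1 / 2 : ℝ)).exp).const_mul ((2 * Real.pi) ^ (-(n : ℝ) / 2))
  have h3 : gaussDensity n = fun v =>
      (2 * Real.pi) ^ (-(n : ℝ) / 2) * Real.exp (-1 / 2 * ‖v‖ ^ 2) := by
    funext v
    rw [gaussDensity]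
    congr 2
    ring
  rw [h3]
  refine h2.congr_fderiv ?_
  ext w
  simp
  ring

/-- **Stein's identity**: `E[f(V) ⟪V, w⟫] = E[∂_w f(V)]` for a standard Gaussian `V`. -/
lemma stein {n : ℕ} {f : EuclideanSpace ℝ (Fin n) → ℝ}
    {f' : EuclideanSpace ℝ (Fin n) → EuclideanSpace ℝ (Fin n) →L[ℝ] ℝ}
    (w : EuclideanSpace ℝ (Fin n)) (hf : ∀ v, HasFDerivAt f (f' v) v)
    (h1 : Integrable f (stdGaussian n)) (h2 : Integrable (fun v => f' v w) (stdGaussian n))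
    (h3 : Integrable (fun v => f v * ⟪v, w⟫) (stdGaussian n)) :
    ∫ v, f v * ⟪v, w⟫ ∂stdGaussian n = ∫ v, f' v w ∂stdGaussian n := by
  rw [integrable_stdGaussian_iff] at h1 h2 h3
  have hg : ∀ v, f v * (-(gaussDensity n v) • innerSL ℝ v) w
      = -(gaussDensity n v • (f v * ⟪v, w⟫)) := by
    intro v
    simp
    ring
  have key := integral_bilinear_hasFDerivAt_right_eq_neg_left_of_integrable
    (μ := (volume : Measure (EuclideanSpace ℝ (Fin n)))) (f := f) (f' := f')
    (g := gaussDensity n) (g' := fun v => -(gaussDensity n v) • innerSL ℝ v) (v := w)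
    (B := ContinuousLinearMap.mul ℝ ℝ)
    (by simpa [mul_comm] using h2)
    (by
      simp only [ContinuousLinearMap.mul_apply', hg]
      exact h3.neg)
    (by simpa [mul_comm] using h1)
    (fun v _ => hf v) (fun v _ => hasFDerivAt_gaussDensity v)
  simp only [ContinuousLinearMap.mul_apply', hg, integral_neg, neg_inj] at key
  rw [integral_stdGaussian, integral_stdGaussian, key]
  simp [mul_comm]

lemma integrable_norm_pow (n : ℕ) {k : ℕ} (hk : k ≤ 4) :
    Integrable (fun v : EuclideanSpace ℝ (Fin n) => ‖v‖ ^ k) (stdGaussian n) :=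
  integrable_of_growth (by fun_prop) 1 fun v => by
    rw [norm_pow, norm_norm, one_mul]
    exact pow_le_one_add_pow_four (norm_nonneg v) hk

/-- `E‖V‖² = n`: Stein's identity applied to `⟪w, ·⟫` gives `E⟪w, V⟫² = 1` for every unit vector `w`;
sum over an orthonormal basis. -/
lemma integral_norm_sq (n : ℕ) : ∫ v, ‖v‖ ^ 2 ∂stdGaussian n = n := by
  have hb : ∀ (w : EuclideanSpace ℝ (Fin n)), ‖w‖ = 1 →
      Integrable (fun v => ⟪w, v⟫ * ⟪v, w⟫) (stdGaussian n) ∧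
        ∫ v, ⟪w, v⟫ * ⟪v, w⟫ ∂stdGaussian n = 1 := by
    intro w hw
    have hle : ∀ v : EuclideanSpace ℝ (Fin n), |⟪w, v⟫| ≤ ‖v‖ := fun v => by
      simpa [hw] using abs_real_inner_le_norm w v
    have i3 : Integrable (fun v => ⟪w, v⟫ * ⟪v, w⟫) (stdGaussian n) := by
      refine (integrable_norm_pow n (k := 2) (by norm_num)).mono'
        (by fun_prop) (Filter.Eventually.of_forall fun v => ?_)
      rw [real_inner_comm w v, Real.norm_eq_abs, abs_mul, sq]
      exact mul_le_mul (hle v) (hle v) (abs_nonneg _) (norm_nonneg _)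
    have i1 : Integrable (fun v => ⟪w, v⟫) (stdGaussian n) := by
      refine (integrable_norm_pow n (k := 1) (by norm_num)).mono'
        (by fun_prop) (Filter.Eventually.of_forall fun v => ?_)
      simpa using hle v
    refine ⟨i3, ?_⟩
    have := stein (f := fun v => ⟪w, v⟫) (f' := fun _ => innerSL ℝ w) w
      (fun v => (innerSL ℝ w).hasFDerivAt) i1 (integrable_const _) i3
    rw [this]
    simp [hw]
  have hsum : ∀ v : EuclideanSpace ℝ (Fin n), ‖v‖ ^ 2
      = ∑ i, ⟪EuclideanSpace.basisFun (Fin n) ℝ i, v⟫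
          * ⟪v, EuclideanSpace.basisFun (Fin n) ℝ i⟫ := by
    intro v
    rw [← real_inner_self_eq_norm_sq, ← (EuclideanSpace.basisFun (Fin n) ℝ).sum_inner_mul_inner]
    exact Finset.sum_congr rfl fun i _ => mul_comm _ _
  simp_rw [hsum]
  rw [integral_finsetSum _ fun i _ => (hb _ ((EuclideanSpace.basisFun (Fin n) ℝ).norm_eq_one i)).1]
  simp_rw [fun i => (hb _ ((EuclideanSpace.basisFun (Fin n) ℝ).norm_eq_one i)).2]
  simp

lemma integral_norm_le (n : ℕ) : ∫ v, ‖v‖ ∂stdGaussian n ≤ ((n : ℝ) + 1) / 2 := by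
  have i1 := integrable_norm_pow n (k := 1) (by norm_num)
  have i2 := integrable_norm_pow n (k := 2) (by norm_num)
  simp only [pow_one] at i1
  calc ∫ v, ‖v‖ ∂stdGaussian n ≤ ∫ v, (‖v‖ ^ 2 + 1) / 2 ∂stdGaussian n := by
        refine integral_mono i1 ((i2.add (integrable_const 1)).div_const 2) fun v => ?_
        change ‖v‖ ≤ (‖v‖ ^ 2 + 1) / 2
        nlinarith [sq_nonneg (‖v‖ - 1)]
    _ = _ := by
        rw [integral_div, integral_add i2 (integrable_const 1), integral_norm_sq]
        simp

section Lipschitz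

variable {n : ℕ} {ω : EuclideanSpace ℝ (Fin n) → ℝ}
    {gradω : EuclideanSpace ℝ (Fin n) → EuclideanSpace ℝ (Fin n)} {L μ : ℝ}

lemma continuous_grad (hL : 0 < L) (hLip : ∀ a b, ‖gradω a - gradω b‖ ≤ L * ‖a - b‖) :
    Continuous gradω := by
  refine (LipschitzWith.of_dist_le_mul (K := ⟨L, hL.le⟩) fun a b => ?_).continuous
  rw [dist_eq_norm, dist_eq_norm]
  exact hLip a b

lemma norm_grad_add_le (hLip : ∀ a b, ‖gradω a - gradω b‖ ≤ L * ‖a - b‖)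
    (x u : EuclideanSpace ℝ (Fin n)) : ‖gradω (x + u)‖ ≤ ‖gradω x‖ + L * ‖u‖ := by
  have h1 := hLip (x + u) x
  rw [add_sub_cancel_left] at h1
  have h2 := norm_le_norm_add_norm_sub' (gradω (x + u)) (gradω x)
  linarith

/-- Mean value inequality on the closed ball of radius `‖u‖` around `x`. -/
lemma abs_sub_le_quadratic (hL : 0 < L) (hω : ∀ x, HasGradientAt ω (gradω x) x)
    (hLip : ∀ a b, ‖gradω a - gradω b‖ ≤ L * ‖a - b‖)
    (x u : EuclideanSpace ℝ (Fin n)) :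
    |ω (x + u) - ω x| ≤ (‖gradω x‖ + L * ‖u‖) * ‖u‖ := by
  have h := (convex_closedBall x ‖u‖).norm_image_sub_le_of_norm_hasFDerivWithin_le
    (f := ω) (f' := fun y => InnerProductSpace.toDual ℝ _ (gradω y))
    (C := ‖gradω x‖ + L * ‖u‖) (x := x) (y := x + u)
    (fun y _ => (hω y).hasFDerivAt.hasFDerivWithinAt)
    (fun y hy => by
      rw [LinearIsometryEquiv.norm_map]
      have h1 := norm_grad_add_le hLip x (y - x)
      rw [add_sub_cancel] at h1
      have h2 : ‖y - x‖ ≤ ‖u‖ := by simpa [dist_eq_norm] using hy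
      have := mul_le_mul_of_nonneg_left h2 hL.le
      linarith)
    (by simp) (by simp)
  simpa using h

/-- The difference quotient `(ω (x + μ v) - ω x) / μ` has at most quadratic growth in `v`. -/
lemma abs_quot_le (hL : 0 < L) (hμ : 0 < μ)
    (hω : ∀ x, HasGradientAt ω (gradω x) x)
    (hLip : ∀ a b, ‖gradω a - gradω b‖ ≤ L * ‖a - b‖) (x v : EuclideanSpace ℝ (Fin n)) :
    |(ω (x + μ • v) - ω x) / μ| ≤ (‖gradω x‖ + L * (μ * ‖v‖)) * ‖v‖ := by
  have h := abs_sub_le_quadratic hL hω hLip x (μ • v)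
  rw [norm_smul, Real.norm_of_nonneg hμ.le] at h
  rw [abs_div, abs_of_pos hμ, div_le_iff₀ hμ]
  linarith

lemma continuous_of_hasGradientAt (hω : ∀ x, HasGradientAt ω (gradω x) x) : Continuous ω :=
  continuous_iff_continuousAt.2 fun y => (hω y).hasFDerivAt.continuousAt

lemma integrable_quot (hL : 0 < L) (hμ : 0 < μ)
    (hω : ∀ x, HasGradientAt ω (gradω x) x)
    (hLip : ∀ a b, ‖gradω a - gradω b‖ ≤ L * ‖a - b‖) (x : EuclideanSpace ℝ (Fin n)) :
    Integrable (fun v => (ω (x + μ • v) - ω x) / μ) (stdGaussian n) := by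
  have hωc := continuous_of_hasGradientAt hω
  have hG := norm_nonneg (gradω x)
  refine integrable_of_growth (by fun_prop) (‖gradω x‖ + L * μ) fun v => ?_
  rw [Real.norm_eq_abs]
  have h1 := pow_le_one_add_pow_four (norm_nonneg v) (k := 1) (by norm_num)
  have h2 := pow_le_one_add_pow_four (norm_nonneg v) (k := 2) (by norm_num)
  have h3 := mul_le_mul_of_nonneg_left h1 hG
  have h4 := mul_le_mul_of_nonneg_left h2 (mul_pos hL hμ).le
  linarith [abs_quot_le hL hμ hω hLip x v]

lemma integrable_quot_smul (hL : 0 < L) (hμ : 0 < μ)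
    (hω : ∀ x, HasGradientAt ω (gradω x) x)
    (hLip : ∀ a b, ‖gradω a - gradω b‖ ≤ L * ‖a - b‖) (x : EuclideanSpace ℝ (Fin n)) :
    Integrable (fun v => ((ω (x + μ • v) - ω x) / μ) • v) (stdGaussian n) := by
  have hωc := continuous_of_hasGradientAt hω
  have hG := norm_nonneg (gradω x)
  refine integrable_of_growth (by fun_prop) (‖gradω x‖ + L * μ) fun v => ?_
  rw [norm_smul, Real.norm_eq_abs]
  have h1 := pow_le_one_add_pow_four (norm_nonneg v) (k := 2) (by norm_num)
  have h2 := pow_le_one_add_pow_four (norm_nonneg v) (k := 3) (by norm_num)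
  have h3 := mul_le_mul_of_nonneg_left h1 hG
  have h4 := mul_le_mul_of_nonneg_left h2 (mul_pos hL hμ).le
  have h5 := mul_le_mul_of_nonneg_right (abs_quot_le hL hμ hω hLip x v) (norm_nonneg v)
  linarith

lemma integrable_grad (hL : 0 < L) (hμ : 0 < μ)
    (hLip : ∀ a b, ‖gradω a - gradω b‖ ≤ L * ‖a - b‖) (x : EuclideanSpace ℝ (Fin n)) :
    Integrable (fun v => gradω (x + μ • v)) (stdGaussian n) := by
  have hgc : Continuous gradω := continuous_grad hL hLip
  have iN := integrable_norm_pow n (k := 1) (by norm_num)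
  simp only [pow_one] at iN
  refine (((integrable_const ‖gradω x‖).add (iN.const_mul (L * μ)))).mono'
    (by fun_prop) (Filter.Eventually.of_forall fun v => ?_)
  have h := norm_grad_add_le hLip x (μ • v)
  rw [norm_smul, Real.norm_of_nonneg hμ.le] at h
  change _ ≤ ‖gradω x‖ + L * μ * ‖v‖
  linarith

/-- Stein's identity for the difference quotient, whose gradient in `v` is `∇ω(x + μv)`. -/
lemma integral_quot_smul_eq (hL : 0 < L) (hμ : 0 < μ)
    (hω : ∀ x, HasGradientAt ω (gradω x) x)
    (hLip : ∀ a b, ‖gradω a - gradω b‖ ≤ L * ‖a - b‖) (x : EuclideanSpace ℝ (Fin n)) :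
    ∫ v, ((ω (x + μ • v) - ω x) / μ) • v ∂stdGaussian n
      = ∫ v, gradω (x + μ • v) ∂stdGaussian n := by
  have i1 := integrable_quot hL hμ hω hLip x
  have i2 := integrable_grad hL hμ hLip x
  have i3 := integrable_quot_smul hL hμ hω hLip x
  refine ext_inner_right ℝ fun w => ?_
  have e1 : ∀ v, inner ℝ w (((ω (x + μ • v) - ω x) / μ) • v)
      = (ω (x + μ • v) - ω x) / μ * inner ℝ v w := fun v => by
    rw [real_inner_smul_right, real_inner_comm]
  have e2 : ∀ v, inner ℝ w (gradω (x + μ • v)) = innerSL ℝ (gradω (x + μ • v)) w := fun v => by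
    rw [innerSL_apply_apply, real_inner_comm]
  have hderiv : ∀ v, HasFDerivAt (fun v => (ω (x + μ • v) - ω x) / μ)
      (innerSL ℝ (gradω (x + μ • v))) v := by
    intro v
    have hlin : HasFDerivAt (fun v : EuclideanSpace ℝ (Fin n) => x + μ • v)
        (μ • ContinuousLinearMap.id ℝ _) v :=
      ((hasFDerivAt_id v).const_smul μ).const_add x
    have hω' : HasFDerivAt ω (innerSL ℝ (gradω (x + μ • v))) (x + μ • v) :=
      (hω (x + μ • v)).hasFDerivAt
    have hc := ((hω'.comp v hlin).sub_const (ω x)).mul_const μ⁻¹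
    simp only [div_eq_mul_inv]
    refine hc.congr_fderiv ?_
    ext u
    simp [hμ.ne']
  have j2 := i2.const_inner (𝕜 := ℝ) w
  have j3 := i3.const_inner (𝕜 := ℝ) w
  simp only [e2] at j2
  simp only [e1] at j3
  have h := stein w hderiv i1 j2 j3
  rw [real_inner_comm, ← integral_inner i3, real_inner_comm, ← integral_inner i2]
  simp only [e1, e2]
  exact h

/-- Differentiation under the integral sign: `∇ω_μ(x) = E[∇ω(x + μV)]`. -/
lemma hasGradientAt_smoothing (hL : 0 < L) (hμ : 0 < μ)
    (hω : ∀ x, HasGradientAt ω (gradω x) x)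
    (hLip : ∀ a b, ‖gradω a - gradω b‖ ≤ L * ‖a - b‖) (x : EuclideanSpace ℝ (Fin n)) :
    HasGradientAt (fun y => ∫ v, ω (y + μ • v) ∂stdGaussian n)
      (∫ v, gradω (x + μ • v) ∂stdGaussian n) x := by
  have hgc : Continuous gradω := continuous_grad hL hLip
  have hωc := continuous_of_hasGradientAt hω
  have iN := integrable_norm_pow n (k := 1) (by norm_num)
  simp only [pow_one] at iN
  have i1 := integrable_quot hL hμ hω hLip x
  have i2 := integrable_grad hL hμ hLip x
  have hcomm : innerSL ℝ (∫ v, gradω (x + μ • v) ∂stdGaussian n)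
      = ∫ v, innerSL ℝ (gradω (x + μ • v)) ∂stdGaussian n :=
    ((innerSL ℝ).integral_comp_comm i2).symm
  have hmeas : ∀ y, AEStronglyMeasurable (fun v => ω (y + μ • v)) (stdGaussian n) :=
    fun y => (hωc.comp
      (by fun_prop : Continuous fun v : EuclideanSpace ℝ (Fin n) => y + μ • v)).aestronglyMeasurable
  have hintegrable : Integrable (fun v => ω (x + μ • v)) (stdGaussian n) := by
    have hsplit : (fun v => ω (x + μ • v))
        = (fun v => (ω (x + μ • v) - ω x) / μ * μ) + fun _ => ω x := by
      funext v
      simp [div_mul_cancel₀ _ hμ.ne']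
    rw [hsplit]
    exact (i1.mul_const μ).add (integrable_const (ω x))
  have hmeas' : AEStronglyMeasurable
      (fun v => innerSL ℝ (gradω (x + μ • v))) (stdGaussian n) :=
    ((innerSL ℝ).continuous.comp (hgc.comp
      (by fun_prop : Continuous fun v : EuclideanSpace ℝ (Fin n) => x + μ • v))).aestronglyMeasurable
  have hdom : ∀ v, ∀ y ∈ Metric.ball x 1,
      ‖innerSL ℝ (gradω (y + μ • v))‖
        ≤ (‖gradω x‖ + L) + L * μ * ‖v‖ := by
    intro v y hy
    rw [innerSL_apply_norm]
    have h1 := norm_grad_add_le hLip x ((y - x) + μ • v)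
    rw [show x + ((y - x) + μ • v) = y + μ • v by abel] at h1
    have h2 := norm_add_le (y - x) (μ • v)
    rw [norm_smul, Real.norm_of_nonneg hμ.le] at h2
    have h3 : ‖y - x‖ ≤ 1 := by
      rw [← dist_eq_norm]; exact (Metric.mem_ball.1 hy).le
    have h4 : ‖(y - x) + μ • v‖ ≤ 1 + μ * ‖v‖ := by linarith
    have h5 := mul_le_mul_of_nonneg_left h4 hL.le
    linarith
  have hdiff : ∀ v, ∀ y ∈ Metric.ball x 1, HasFDerivAt (fun y => ω (y + μ • v))
      (innerSL ℝ (gradω (y + μ • v))) y := fun v y _ =>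
    (hasFDerivAt_comp_add_right (μ • v)).2 (hω (y + μ • v)).hasFDerivAt
  have hbound : Integrable (fun v => (‖gradω x‖ + L) + L * μ * ‖v‖) (stdGaussian n) :=
    (integrable_const (‖gradω x‖ + L)).add (iN.const_mul (L * μ))
  have key := hasFDerivAt_integral_of_dominated_of_fderiv_le (𝕜 := ℝ)
    (F := fun y v => ω (y + μ • v)) (F' := fun y v => innerSL ℝ (gradω (y + μ • v)))
    (Metric.ball_mem_nhds x one_pos) (Filter.Eventually.of_forall hmeas) hintegrable hmeas'
    (Filter.Eventually.of_forall hdom) hbound (Filter.Eventually.of_forall hdiff)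
  rw [← hcomm] at key
  exact key

end Lipschitz

end GaussianSmoothing

/-- the Gaussian smoothing ω_μ is differentiable with
∇ω_μ(x) = ∫ ((ω(x + μv) − ω(x))/μ)·v dγ_n(v), and
‖∇ω_μ(x) − ∇ω(x)‖ ≤ (μ/2)·L·(n + 3)^{3/2}. -/
theorem stmt_16 {n : ℕ} (ω : EuclideanSpace ℝ (Fin n) → ℝ)
    (gradω : EuclideanSpace ℝ (Fin n) → EuclideanSpace ℝ (Fin n))
    (L μ : ℝ) (hL : 0 < L) (hμ : 0 < μ)
    (hω : ∀ x, HasGradientAt ω (gradω x) x)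
    (hLip : ∀ a b, ‖gradω a - gradω b‖ ≤ L * ‖a - b‖)
    (x : EuclideanSpace ℝ (Fin n)) :
    HasGradientAt (fun y => ∫ v, ω (y + μ • v) ∂stdGaussian n)
        (∫ v, ((ω (x + μ • v) - ω x) / μ) • v ∂stdGaussian n) x ∧
      ‖(∫ v, ((ω (x + μ • v) - ω x) / μ) • v ∂stdGaussian n) - gradω x‖ ≤
        μ / 2 * L * ((n : ℝ) + 3) ^ ((3 : ℝ) / 2) := by
  rw [integral_quot_smul_eq hL hμ hω hLip x]
  refine ⟨hasGradientAt_smoothing hL hμ hω hLip x, ?_⟩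
  have iN := integrable_norm_pow n (k := 1) (by norm_num)
  simp only [pow_one] at iN
  have i2 := integrable_grad hL hμ hLip x
  have hsub : (∫ v, gradω (x + μ • v) ∂stdGaussian n) - gradω x
      = ∫ v, (gradω (x + μ • v) - gradω x) ∂stdGaussian n := by
    rw [integral_sub i2 (integrable_const _)]
    simp
  have hpow : (n : ℝ) + 1 ≤ ((n : ℝ) + 3) ^ ((3 : ℝ) / 2) := by
    have hn : (0 : ℝ) ≤ n := Nat.cast_nonneg n
    calc (n : ℝ) + 1 ≤ ((n : ℝ) + 3) ^ (1 : ℝ) := by rw [Real.rpow_one]; linarith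
      _ ≤ _ := Real.rpow_le_rpow_of_exponent_le (by linarith) (by norm_num)
  rw [hsub]
  calc ‖∫ v, (gradω (x + μ • v) - gradω x) ∂stdGaussian n‖
      ≤ ∫ v, L * μ * ‖v‖ ∂stdGaussian n := by
        refine norm_integral_le_of_norm_le (iN.const_mul _)
          (Filter.Eventually.of_forall fun v => ?_)
        have h := hLip (x + μ • v) x
        rw [add_sub_cancel_left, norm_smul, Real.norm_of_nonneg hμ.le] at h
        linarith
    _ = L * μ * ∫ v, ‖v‖ ∂stdGaussian n := integral_const_mul _ _
    _ ≤ L * μ * (((n : ℝ) + 1) / 2) := by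
        gcongr
        exact integral_norm_le n
    _ = μ / 2 * L * ((n : ℝ) + 1) := by ring
    _ ≤ _ := by gcongr
end

section
/- For every x ∈ ℝ^n and μ > 0: ∫_{ℝ^n} ‖ ((ω(x + μv) − ω(x))/μ)·v ‖² dγ_n(v) ≤ 2(n + 4)·‖∇ω(x)‖² + (μ²/2)·L²·(n + 6)³. -/
/-!
Write `g = ∇ω(x)`. The descent lemma gives `|ω(x + μv) - ω(x) - ⟪g, μv⟫| ≤ (L/2) ‖μv‖²`, so with
`(a + b)² ≤ 2a² + 2b²` the integrand is at most
`2 ⟪g, v⟫² ‖v‖² + (μ²/2) L² ‖v‖⁶`.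

The Gaussian integral of this bound is explicit. In polar coordinates the radial moments reduce to
`∫₀^∞ r^q e^{-r²/2} dr`, whose recursion in `q` yields `E‖v‖^(p+2) = (n + p) E‖v‖^p`
(`integral_norm_pow_add_two`), hence `E‖v‖⁴ = n(n+2)` and `E‖v‖⁶ = n(n+2)(n+4)`. By rotation
invariance `E[⟪g, v⟫² ‖v‖²]` depends on `g` only through `‖g‖`; summing over an orthonormal basis
gives `n E[⟪g, v⟫² ‖v‖²] = ‖g‖² E‖v‖⁴`, so the mixed moment is `(n + 2) ‖g‖²`.

The result is thus `2(n+2)‖g‖² + (μ²/2) L² n(n+2)(n+4)`, which is below the asserted bound.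
-/


open MeasureTheory

/-- Descent lemma: the first-order Taylor remainder of a function whose gradient is `L`-Lipschitz
is at most `(L/2) ‖w‖²`. -/
lemma abs_taylor_remainder_le {n : ℕ} {ω : EuclideanSpace ℝ (Fin n) → ℝ}
    {gradω : EuclideanSpace ℝ (Fin n) → EuclideanSpace ℝ (Fin n)} {L : ℝ}
    (hω : ∀ x, HasGradientAt ω (gradω x) x)
    (hLip : ∀ a b, ‖gradω a - gradω b‖ ≤ L * ‖a - b‖) (x w : EuclideanSpace ℝ (Fin n)) :
    |ω (x + w) - ω x - inner ℝ (gradω x) w| ≤ L / 2 * ‖w‖ ^ 2 := by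
  have hd : ∀ t : ℝ, HasDerivAt
      (fun t : ℝ => ω (x + t • w) - ω x - t * inner ℝ (gradω x) w)
      (inner ℝ (gradω (x + t • w)) w - inner ℝ (gradω x) w) t := by
    intro t
    have h1 : HasDerivAt (fun t : ℝ => x + t • w) w t := by
      simpa using ((hasDerivAt_id t).smul_const w).const_add x
    have h2 := (hω (x + t • w)).hasFDerivAt.comp_hasDerivAt t h1
    have h3 := (h2.sub_const (ω x)).sub ((hasDerivAt_id t).mul_const (inner ℝ (gradω x) w))
    refine h3.congr_deriv ?_
    simp
  have hB : ∀ t : ℝ, HasDerivAt (fun t : ℝ => L / 2 * ‖w‖ ^ 2 * t ^ 2) (L * t * ‖w‖ ^ 2) t := by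
    intro t
    have h := (hasDerivAt_pow 2 t).const_mul (L / 2 * ‖w‖ ^ 2)
    refine h.congr_deriv ?_
    norm_num
    ring
  have key := image_norm_le_of_norm_deriv_right_le_deriv_boundary' (a := 0) (b := 1)
    (fun t _ => (hd t).continuousAt.continuousWithinAt)
    (fun t _ => (hd t).hasDerivWithinAt)
    (B := fun t => L / 2 * ‖w‖ ^ 2 * t ^ 2) (by simp)
    (fun t _ => (hB t).continuousAt.continuousWithinAt)
    (fun t _ => (hB t).hasDerivWithinAt)
    (by
      intro t ht
      rw [← inner_sub_left]
      have h1 := norm_inner_le_norm (𝕜 := ℝ) (gradω (x + t • w) - gradω x) w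
      have h2 := hLip (x + t • w) x
      rw [add_sub_cancel_left, norm_smul, Real.norm_of_nonneg ht.1] at h2
      nlinarith [norm_nonneg w])
    (Set.right_mem_Icc.2 zero_le_one)
  simpa [Real.norm_eq_abs] using key

lemma integral_stdGaussian_s17 {n : ℕ} (f : EuclideanSpace ℝ (Fin n) → ℝ) :
    ∫ v, f v ∂stdGaussian n =
      (2 * Real.pi) ^ (-(n : ℝ) / 2) * ∫ v, Real.exp (-‖v‖ ^ 2 / 2) * f v := by
  unfold stdGaussian
  rw [integral_withDensity_eq_integral_toReal_smul (by fun_prop) (by simp),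
    ← integral_const_mul]
  refine integral_congr_ae (Filter.Eventually.of_forall fun v => ?_)
  simp only [smul_eq_mul]
  rw [ENNReal.toReal_ofReal (by positivity)]
  ring

lemma integrable_norm_pow_stdGaussian {n : ℕ} (hn : 0 < n) (p : ℕ) :
    Integrable (fun v => ‖v‖ ^ p) (stdGaussian n) := by
  have : NeZero n := ⟨hn.ne'⟩
  unfold stdGaussian
  rw [integrable_withDensity_iff_integrable_smul' (by fun_prop) (by simp)]
  have h : Integrable (fun v : EuclideanSpace ℝ (Fin n) =>
      (fun r : ℝ => Real.exp (-r ^ 2 / 2) * r ^ p) ‖v‖) := by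
    refine (integrable_fun_norm_addHaar volume
      (f := fun r : ℝ => Real.exp (-r ^ 2 / 2) * r ^ p)).2 ?_
    have h0 : (-1 : ℝ) < ((n - 1 + p : ℕ) : ℝ) := by
      have := Nat.cast_nonneg (α := ℝ) (n - 1 + p)
      linarith
    have h1 := integrableOn_rpow_mul_exp_neg_mul_sq (b := 1 / 2) (by norm_num) h0
    refine h1.congr_fun (fun r _ => ?_) measurableSet_Ioi
    simp only [Real.rpow_natCast, finrank_euclideanSpace, Fintype.card_fin, smul_eq_mul]
    rw [pow_add, show -(1 / 2 : ℝ) * r ^ 2 = -r ^ 2 / 2 by ring]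
    ring
  refine (h.const_mul ((2 * Real.pi) ^ (-(n : ℝ) / 2))).congr
    (Filter.Eventually.of_forall fun v => ?_)
  simp only [smul_eq_mul]
  rw [ENNReal.toReal_ofReal (by positivity)]
  ring

/-- The recursion `∫₀^∞ r^(q+2) e^{-r²/2} dr = (q + 1) ∫₀^∞ r^q e^{-r²/2} dr`, a form of
`Γ(s + 1) = s Γ(s)`. -/
lemma integral_Ioi_pow_add_two (q : ℕ) :
    ∫ r in Set.Ioi (0 : ℝ), r ^ (q + 2) * Real.exp (-r ^ 2 / 2) =
      ((q : ℝ) + 1) * ∫ r in Set.Ioi (0 : ℝ), r ^ q * Real.exp (-r ^ 2 / 2) := by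
  have key : ∀ k : ℕ, ∫ r in Set.Ioi (0 : ℝ), r ^ k * Real.exp (-r ^ 2 / 2) =
      (1 / 2 : ℝ) ^ (-((k : ℝ) + 1) / 2) * (1 / 2) * Real.Gamma (((k : ℝ) + 1) / 2) := by
    intro k
    have h0 : (-1 : ℝ) < (k : ℝ) := by
      have := Nat.cast_nonneg (α := ℝ) k
      linarith
    rw [← integral_rpow_mul_exp_neg_mul_rpow two_pos h0 (by norm_num : (0 : ℝ) < 1 / 2)]
    refine integral_congr_ae (Filter.Eventually.of_forall fun r => ?_)
    simp only [Real.rpow_natCast, Real.rpow_two]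
    rw [show -(1 / 2 : ℝ) * r ^ 2 = -r ^ 2 / 2 by ring]
  rw [key, key]
  push_cast
  rw [show ((q : ℝ) + 2 + 1) / 2 = ((q : ℝ) + 1) / 2 + 1 by ring, Real.Gamma_add_one (by positivity),
    show -((q : ℝ) + 2 + 1) / 2 = -((q : ℝ) + 1) / 2 - 1 by ring,
    Real.rpow_sub_one (by norm_num)]
  ring

lemma integral_norm_pow_eq {n : ℕ} (hn : 0 < n) (p : ℕ) :
    ∫ v, ‖v‖ ^ p ∂stdGaussian n =
      (2 * Real.pi) ^ (-(n : ℝ) / 2) *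
        (n * (volume.real (Metric.ball (0 : EuclideanSpace ℝ (Fin n)) 1) *
          ∫ r in Set.Ioi (0 : ℝ), r ^ (n - 1 + p) * Real.exp (-r ^ 2 / 2))) := by
  have : NeZero n := ⟨hn.ne'⟩
  rw [integral_stdGaussian_s17]
  have := integral_fun_norm_addHaar (volume : Measure (EuclideanSpace ℝ (Fin n)))
    (fun r : ℝ => Real.exp (-r ^ 2 / 2) * r ^ p)
  rw [this]
  simp only [finrank_euclideanSpace, Fintype.card_fin, smul_eq_mul, nsmul_eq_mul]
  congr 4
  ext r
  rw [pow_add]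
  ring

/-- The moment recursion `E‖v‖^(p+2) = (n + p) E‖v‖^p`. -/
lemma integral_norm_pow_add_two {n : ℕ} (hn : 0 < n) (p : ℕ) :
    ∫ v, ‖v‖ ^ (p + 2) ∂stdGaussian n = ((n : ℝ) + p) * ∫ v, ‖v‖ ^ p ∂stdGaussian n := by
  rw [integral_norm_pow_eq hn, integral_norm_pow_eq hn, ← add_assoc, integral_Ioi_pow_add_two]
  push_cast [Nat.cast_sub (show 1 ≤ n from hn)]
  ring

lemma integral_norm_pow_zero (n : ℕ) : ∫ v, ‖v‖ ^ 0 ∂stdGaussian n = 1 := by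
  rw [integral_stdGaussian_s17]
  have h := GaussianFourier.integral_rexp_neg_mul_sq_norm (V := EuclideanSpace ℝ (Fin n))
    (b := 1 / 2) (by norm_num)
  rw [finrank_euclideanSpace, Fintype.card_fin] at h
  have e : ∀ v : EuclideanSpace ℝ (Fin n), Real.exp (-‖v‖ ^ 2 / 2) * ‖v‖ ^ 0 =
      Real.exp (-(1 / 2) * ‖v‖ ^ 2) := by
    intro v
    rw [pow_zero, mul_one]
    congr 1
    ring
  simp_rw [e]
  rw [h, show Real.pi / (1 / 2) = 2 * Real.pi by ring, ← Real.rpow_add (by positivity),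
    show -(n : ℝ) / 2 + n / 2 = 0 by ring, Real.rpow_zero]

lemma integral_norm_pow_four {n : ℕ} (hn : 0 < n) :
    ∫ v, ‖v‖ ^ 4 ∂stdGaussian n = (n : ℝ) * (n + 2) := by
  rw [integral_norm_pow_add_two hn 2, integral_norm_pow_add_two hn 0, integral_norm_pow_zero]
  push_cast
  ring

lemma integral_norm_pow_six {n : ℕ} (hn : 0 < n) :
    ∫ v, ‖v‖ ^ 6 ∂stdGaussian n = (n : ℝ) * (n + 2) * (n + 4) := by
  rw [integral_norm_pow_add_two hn 4, integral_norm_pow_four hn]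
  push_cast
  ring

lemma integrable_inner_sq_mul_norm_sq {n : ℕ} (hn : 0 < n) (g : EuclideanSpace ℝ (Fin n)) :
    Integrable (fun v => inner ℝ g v ^ 2 * ‖v‖ ^ 2) (stdGaussian n) := by
  refine ((integrable_norm_pow_stdGaussian hn 4).const_mul (‖g‖ ^ 2)).mono'
    (by fun_prop) (Filter.Eventually.of_forall fun v => ?_)
  rw [Real.norm_of_nonneg (by positivity)]
  have h : inner ℝ g v ^ 2 ≤ (‖g‖ * ‖v‖) ^ 2 :=
    sq_le_sq' (neg_le_of_abs_le (abs_real_inner_le_norm g v)) (real_inner_le_norm g v)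
  calc inner ℝ g v ^ 2 * ‖v‖ ^ 2 ≤ (‖g‖ * ‖v‖) ^ 2 * ‖v‖ ^ 2 := by gcongr
    _ = ‖g‖ ^ 2 * ‖v‖ ^ 4 := by ring

/-- Rotation invariance: the mixed moment depends on the direction only through its length, since
vectors of equal norm are exchanged by a reflection. -/
lemma integral_inner_sq_mul_norm_sq_congr {n : ℕ} {g h : EuclideanSpace ℝ (Fin n)}
    (hgh : ‖g‖ = ‖h‖) :
    ∫ v, inner ℝ g v ^ 2 * ‖v‖ ^ 2 ∂stdGaussian n =
      ∫ v, inner ℝ h v ^ 2 * ‖v‖ ^ 2 ∂stdGaussian n := by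
  rw [integral_stdGaussian_s17, integral_stdGaussian_s17]
  congr 1
  set R := (Submodule.span ℝ {g - h})ᗮ.reflection with hR
  have hRg : R g = h := Submodule.reflection_sub hgh
  rw [← R.measurePreserving.integral_comp R.toHomeomorph.measurableEmbedding
    (fun v => Real.exp (-‖v‖ ^ 2 / 2) * (inner ℝ h v ^ 2 * ‖v‖ ^ 2))]
  refine integral_congr_ae (Filter.Eventually.of_forall fun v => ?_)
  simp only
  rw [← hRg, R.inner_map_map, R.norm_map]

lemma integral_inner_sq_mul_norm_sq {n : ℕ} (hn : 0 < n) (g : EuclideanSpace ℝ (Fin n)) :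
    ∫ v, inner ℝ g v ^ 2 * ‖v‖ ^ 2 ∂stdGaussian n = ((n : ℝ) + 2) * ‖g‖ ^ 2 := by
  have h1 : ∀ i : Fin n, ∫ v, inner ℝ g v ^ 2 * ‖v‖ ^ 2 ∂stdGaussian n =
      ∫ v : EuclideanSpace ℝ (Fin n), ‖g‖ ^ 2 * (v i ^ 2 * ‖v‖ ^ 2) ∂stdGaussian n := by
    intro i
    rw [integral_inner_sq_mul_norm_sq_congr (h := EuclideanSpace.single i ‖g‖) (by simp)]
    refine integral_congr_ae (Filter.Eventually.of_forall fun v => ?_)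
    simp only [EuclideanSpace.inner_single_left]
    simp
    ring
  have hint : ∀ i : Fin n, Integrable (fun v : EuclideanSpace ℝ (Fin n) =>
      ‖g‖ ^ 2 * (v i ^ 2 * ‖v‖ ^ 2)) (stdGaussian n) := by
    intro i
    have := (integrable_inner_sq_mul_norm_sq hn (EuclideanSpace.single i (1 : ℝ))).const_mul
      (‖g‖ ^ 2)
    simpa [EuclideanSpace.inner_single_left] using this
  have h2 : (n : ℝ) * ∫ v, inner ℝ g v ^ 2 * ‖v‖ ^ 2 ∂stdGaussian n =
      ‖g‖ ^ 2 * ((n : ℝ) * (n + 2)) := by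
    calc (n : ℝ) * ∫ v, inner ℝ g v ^ 2 * ‖v‖ ^ 2 ∂stdGaussian n
        = ∑ _i : Fin n, ∫ v, inner ℝ g v ^ 2 * ‖v‖ ^ 2 ∂stdGaussian n := by simp
      _ = ∑ i : Fin n, ∫ v : EuclideanSpace ℝ (Fin n),
            ‖g‖ ^ 2 * (v i ^ 2 * ‖v‖ ^ 2) ∂stdGaussian n :=
          Finset.sum_congr rfl fun i _ => h1 i
      _ = ∫ v : EuclideanSpace ℝ (Fin n),
            ∑ i : Fin n, ‖g‖ ^ 2 * (v i ^ 2 * ‖v‖ ^ 2) ∂stdGaussian n :=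
          (integral_finsetSum _ fun i _ => hint i).symm
      _ = ∫ v : EuclideanSpace ℝ (Fin n), ‖g‖ ^ 2 * ‖v‖ ^ 4 ∂stdGaussian n := by
          refine integral_congr_ae (Filter.Eventually.of_forall fun v => ?_)
          simp only
          rw [← Finset.mul_sum, ← Finset.sum_mul, ← EuclideanSpace.real_norm_sq_eq]
          ring
      _ = _ := by rw [integral_const_mul, integral_norm_pow_four hn]
  have hn' : (n : ℝ) ≠ 0 := by exact_mod_cast hn.ne'
  apply mul_left_cancel₀ hn'
  rw [h2]
  ring

/-- The pointwise domination of the integrand by a polynomial in `⟪∇ω(x), v⟫` and `‖v‖`. -/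
lemma norm_sq_estimator_le {n : ℕ} {ω : EuclideanSpace ℝ (Fin n) → ℝ}
    {gradω : EuclideanSpace ℝ (Fin n) → EuclideanSpace ℝ (Fin n)} {L μ : ℝ} (hμ : 0 < μ)
    (hω : ∀ x, HasGradientAt ω (gradω x) x)
    (hLip : ∀ a b, ‖gradω a - gradω b‖ ≤ L * ‖a - b‖) (x v : EuclideanSpace ℝ (Fin n)) :
    ‖((ω (x + μ • v) - ω x) / μ) • v‖ ^ 2 ≤
      2 * (inner ℝ (gradω x) v ^ 2 * ‖v‖ ^ 2) + μ ^ 2 / 2 * L ^ 2 * ‖v‖ ^ 6 := by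
  have h := abs_taylor_remainder_le hω hLip x (μ • v)
  rw [real_inner_smul_right, norm_smul, Real.norm_of_nonneg hμ.le] at h
  obtain ⟨d, hd⟩ : ∃ d, (ω (x + μ • v) - ω x) / μ = d := ⟨_, rfl⟩
  have hd' : ω (x + μ • v) - ω x = μ * d := by rw [← hd]; field_simp
  rw [hd, norm_smul, mul_pow, Real.norm_eq_abs, sq_abs]
  rw [hd', ← mul_sub, abs_mul, abs_of_pos hμ] at h
  have h' : |d - inner ℝ (gradω x) v| ≤ μ * L / 2 * ‖v‖ ^ 2 := by
    refine le_of_mul_le_mul_left (h.trans_eq ?_) hμ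
    ring
  have hs : (d - inner ℝ (gradω x) v) ^ 2 ≤ (μ * L / 2 * ‖v‖ ^ 2) ^ 2 := by
    rw [← sq_abs]
    gcongr
  have h2 : d ^ 2 ≤ 2 * inner ℝ (gradω x) v ^ 2 + 2 * (μ * L / 2 * ‖v‖ ^ 2) ^ 2 := by
    nlinarith [sq_nonneg (d - 2 * inner ℝ (gradω x) v)]
  calc d ^ 2 * ‖v‖ ^ 2
      ≤ (2 * inner ℝ (gradω x) v ^ 2 + 2 * (μ * L / 2 * ‖v‖ ^ 2) ^ 2) * ‖v‖ ^ 2 := by gcongr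
    _ = _ := by ring

/-- second-moment bound for the Gaussian finite-difference estimator:
∫ ‖((ω(x + μv) − ω(x))/μ)·v‖² dγ_n(v) ≤ 2(n + 4)‖∇ω(x)‖² + (μ²/2)·L²·(n + 6)³. -/
theorem stmt_17 {n : ℕ} (ω : EuclideanSpace ℝ (Fin n) → ℝ)
    (gradω : EuclideanSpace ℝ (Fin n) → EuclideanSpace ℝ (Fin n))
    (L μ : ℝ) (hL : 0 < L) (hμ : 0 < μ)
    (hω : ∀ x, HasGradientAt ω (gradω x) x)
    (hLip : ∀ a b, ‖gradω a - gradω b‖ ≤ L * ‖a - b‖)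
    (x : EuclideanSpace ℝ (Fin n)) :
    ∫ v, ‖((ω (x + μ • v) - ω x) / μ) • v‖ ^ 2 ∂stdGaussian n ≤
      2 * ((n : ℝ) + 4) * ‖gradω x‖ ^ 2 + μ ^ 2 / 2 * L ^ 2 * ((n : ℝ) + 6) ^ 3 := by
  rcases Nat.eq_zero_or_pos n with rfl | hn
  · have h0 : ∀ v : EuclideanSpace ℝ (Fin 0),
        ‖((ω (x + μ • v) - ω x) / μ) • v‖ ^ 2 = 0 := fun v => by
      rw [Subsingleton.elim v 0]; simp
    rw [integral_congr_ae (Filter.Eventually.of_forall h0), integral_zero]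
    positivity
  have hi1 := (integrable_inner_sq_mul_norm_sq hn (gradω x)).const_mul 2
  have hi2 := (integrable_norm_pow_stdGaussian hn 6).const_mul (μ ^ 2 / 2 * L ^ 2)
  have hmono : ∫ v, ‖((ω (x + μ • v) - ω x) / μ) • v‖ ^ 2 ∂stdGaussian n ≤
      ∫ v, (2 * (inner ℝ (gradω x) v ^ 2 * ‖v‖ ^ 2) + μ ^ 2 / 2 * L ^ 2 * ‖v‖ ^ 6)
        ∂stdGaussian n := by
    refine integral_mono_of_nonneg (Filter.Eventually.of_forall fun v => ?_) (hi1.add hi2)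
      (Filter.Eventually.of_forall fun v => ?_)
    · exact sq_nonneg _
    · exact norm_sq_estimator_le hμ hω hLip x v
  rw [integral_add hi1 hi2, integral_const_mul, integral_const_mul,
    integral_inner_sq_mul_norm_sq hn, integral_norm_pow_six hn] at hmono
  refine hmono.trans ?_
  have hn0 : (0 : ℝ) ≤ n := Nat.cast_nonneg n
  have e : (n : ℝ) * (n + 2) * (n + 4) ≤ ((n : ℝ) + 6) ^ 3 := by
    nlinarith [mul_nonneg hn0 hn0]
  have e1 : 2 * (((n : ℝ) + 2) * ‖gradω x‖ ^ 2) ≤ 2 * ((n : ℝ) + 4) * ‖gradω x‖ ^ 2 := by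
    nlinarith [sq_nonneg ‖gradω x‖]
  exact add_le_add e1 (mul_le_mul_of_nonneg_left e (by positivity))
end
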